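/- arXiv:2210.06692 — 2 statements merged into one kernel-verified Lean document; each statement's English description precedes it below -/
import Mathlib

section
/- (Theorem 1, Policy Evaluation) The (N,k)-pessimistic Bellman operator is a γ-contraction for the sup norm: for all Q1, Q2 : S × A → ℝ, ‖B^π_{N,k} Q1 − B^π_{N,k} Q2‖_∞ ≤ γ · ‖Q1 − Q2‖_∞. Consequently B^π_{N,k} has a unique fixed point Q^π_{N,k}, and for any starting Q the iterates (B^π_{N,k})^n Q converge to Q^π_{N,k} in sup norm. -/
/-- `kmin x k` is the entry in position `k` (0-indexed) of a monotone nondecreasing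
sorted arrangement of the tuple `x`, i.e. the `(k+1)`-th smallest entry counted with
multiplicity. -/
noncomputable def kmin {N : ℕ} (x : Fin N → ℝ) (k : Fin N) : ℝ := x (Tuple.sort x k)

/-- A probability mass function on a finite type: nonnegative and summing to one. -/
def IsPMF {α : Type*} [Fintype α] (p : α → ℝ) : Prop :=
  (∀ a, 0 ≤ p a) ∧ ∑ a, p a = 1

/-- Sup norm `‖Q‖_∞ = max_{(s,a)} |Q(s,a)|` on `S × A → ℝ` (curried). -/
noncomputable def supNorm {S A : Type*} [Fintype S] [Fintype A] [Nonempty S] [Nonempty A]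
    (Q : S → A → ℝ) : ℝ :=
  Finset.univ.sup' Finset.univ_nonempty (fun p : S × A => |Q p.1 p.2|)

/-- The `(N,k)`-pessimistic Bellman operator (with `k` given 0-indexed as `k : Fin N`):
`(B^π_{N,k} Q)(s,a) = r(s,a) + γ · Σ_{v : Fin N → ι} (Π_j P(v_j)) ·
  kmin_k( j ↦ Σ_{s'} M(v_j)(s,a)(s') · Σ_{a'} π(a'|s') · Q(s',a') )`. -/
noncomputable def pessBellman {S A ι : Type*} [Fintype S] [Fintype A] [Fintype ι]
    (r : S → A → ℝ) (γ : ℝ) (P : ι → ℝ) (M : ι → S → A → S → ℝ)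
    (π : S → A → ℝ) (N : ℕ) (k : Fin N) (Q : S → A → ℝ) : S → A → ℝ :=
  fun s a => r s a + γ * ∑ v : Fin N → ι, (∏ j, P (v j)) *
    kmin (fun j => ∑ s', M (v j) s a s' * ∑ a', π s' a' * Q s' a') k

/-!
The contraction property is an instance of Blackwell's sufficient conditions. Order statistics and
expectations are monotone and commute with adding a constant to all entries, so the Bellman operator
is monotone and turns a constant increase `c` of `Q` into the constant increase `γ * c`. Applying
this to `Q₁ ≤ Q₂ + ‖Q₁ - Q₂‖`, and to the same inequality with `Q₁` and `Q₂` exchanged, gives the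
Lipschitz bound; the rest is Banach's fixed point theorem.
-/

open scoped Finset NNReal

section OrderStatistic

variable {N : ℕ} {x y : Fin N → ℝ}

theorem kmin_le_iff_lt_card {k : Fin N} {a : ℝ} : kmin x k ≤ a ↔ k < #{i | x i ≤ a} := by
  have card_sort : #{i | (x ∘ Tuple.sort x) i ≤ a} = #{i | x i ≤ a} :=
    Finset.card_equiv (Tuple.sort x) (by simp)
  rw [← card_sort]
  exact (Tuple.lt_card_le_iff_apply_le_of_monotone (Tuple.monotone_sort x)).symm

theorem kmin_le_kmin (hxy : x ≤ y) (k : Fin N) : kmin x k ≤ kmin y k := by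
  have card_le : #{i | y i ≤ kmin y k} ≤ #{i | x i ≤ kmin y k} :=
    Finset.card_le_card <| Finset.monotone_filter_right _ fun i _ => (hxy i).trans
  exact kmin_le_iff_lt_card.2 <| (kmin_le_iff_lt_card.1 le_rfl).trans_le card_le

theorem kmin_comp_of_monotone {f : ℝ → ℝ} (hf : Monotone f) (x : Fin N → ℝ) (k : Fin N) :
    kmin (f ∘ x) k = f (kmin x k) := by
  have comp_sort_eq : (f ∘ x) ∘ Tuple.sort x = (f ∘ x) ∘ Tuple.sort (f ∘ x) :=
    Tuple.comp_sort_eq_comp_iff_monotone.2 (hf.comp (Tuple.monotone_sort x))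
  exact (congrFun comp_sort_eq k).symm

theorem kmin_add_const (x : Fin N → ℝ) (c : ℝ) (k : Fin N) :
    kmin (fun i => x i + c) k = kmin x k + c :=
  kmin_comp_of_monotone (add_left_mono (a := c)) x k

end OrderStatistic

namespace IsPMF

theorem sum_mul_le_sum_mul {α : Type*} [Fintype α] {p : α → ℝ} (hp : IsPMF p) {f g : α → ℝ}
    (hfg : f ≤ g) : ∑ a, p a * f a ≤ ∑ a, p a * g a :=
  Finset.sum_le_sum fun a _ => mul_le_mul_of_nonneg_left (hfg a) (hp.1 a)

theorem sum_mul_add_const {α : Type*} [Fintype α] {p : α → ℝ} (hp : IsPMF p) (f : α → ℝ) (c : ℝ) :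
    ∑ a, p a * (f a + c) = ∑ a, p a * f a + c := by
  simp only [mul_add, Finset.sum_add_distrib, ← Finset.sum_mul, hp.2, one_mul]

theorem pi {κ : Type*} [Fintype κ] [DecidableEq κ] {α : κ → Type*} [∀ j, Fintype (α j)]
    {p : ∀ j, α j → ℝ} (hp : ∀ j, IsPMF (p j)) :
    IsPMF fun v : ∀ j, α j => ∏ j, p j (v j) := by
  refine ⟨fun v => Finset.prod_nonneg fun j _ => (hp j).1 (v j), ?_⟩
  rw [← Fintype.prod_sum]
  exact Finset.prod_eq_one fun j _ => (hp j).2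

end IsPMF

section SupNorm

variable {S A : Type*} [Fintype S] [Fintype A]

theorem le_norm_smul_one (Q : S → A → ℝ) : Q ≤ ‖Q‖ • (1 : S → A → ℝ) := fun s a => by
  simpa using (le_abs_self (Q s a)).trans
    ((norm_le_pi_norm (Q s) a).trans (norm_le_pi_norm Q s))

theorem supNorm_eq_norm [Nonempty S] [Nonempty A] (Q : S → A → ℝ) : supNorm Q = ‖Q‖ :=
  eq_of_forall_ge_iff fun c => by simp [supNorm, pi_norm_le_iff_of_nonempty]

theorem supNorm_sub_eq_dist [Nonempty S] [Nonempty A] (Q₁ Q₂ : S → A → ℝ) :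
    supNorm (fun s a => Q₁ s a - Q₂ s a) = dist Q₁ Q₂ :=
  (supNorm_eq_norm (Q₁ - Q₂)).trans (dist_eq_norm Q₁ Q₂).symm

end SupNorm

/-- Blackwell's argument, with an order unit `e` in place of the constant function `1`. -/
theorem abs_sub_le_mul_norm_of_monotone {E : Type*} [SeminormedAddCommGroup E] [Preorder E]
    [IsOrderedAddMonoid E] [SMul ℝ E] {e : E} (le_norm_smul : ∀ x : E, x ≤ ‖x‖ • e)
    {f : E → ℝ} (hf : Monotone f) {γ : ℝ}
    (map_add_smul_le : ∀ (x : E) (c : ℝ), 0 ≤ c → f (x + c • e) ≤ f x + γ * c) (x y : E) :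
    |f x - f y| ≤ γ * ‖x - y‖ := by
  have sub_le (x y : E) : f x - f y ≤ γ * ‖x - y‖ := by
    rw [sub_le_iff_le_add']
    calc
      f x = f (y + (x - y)) := by rw [add_sub_cancel]
      _ ≤ f (y + ‖x - y‖ • e) := hf (add_le_add_right (le_norm_smul (x - y)) y)
      _ ≤ f y + γ * ‖x - y‖ := map_add_smul_le y _ (norm_nonneg _)
  exact abs_sub_le_iff.2 ⟨sub_le x y, norm_sub_rev x y ▸ sub_le y x⟩

section Bellman

variable {S A ι : Type*} [Fintype S] [Fintype A]

/-- The expectation of `Q(s', a')` for a next state `s'` distributed according to `p` and an action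
`a'` distributed according to `π(·|s')`; with `p = M v s a` this is the quantity whose order
statistics over the sampled models enter `pessBellman`. -/
def nextValue (π : S → A → ℝ) (p : S → ℝ) (Q : S → A → ℝ) : ℝ :=
  ∑ s', p s' * ∑ a', π s' a' * Q s' a'

variable {π : S → A → ℝ} {p : S → ℝ}

theorem monotone_nextValue (hπ : ∀ s, IsPMF (π s)) (hp : IsPMF p) : Monotone (nextValue π p) :=
  fun _ _ hQ => hp.sum_mul_le_sum_mul fun s' => (hπ s').sum_mul_le_sum_mul (hQ s')

theorem nextValue_add_const (hπ : ∀ s, IsPMF (π s)) (hp : IsPMF p) (Q : S → A → ℝ) (c : ℝ) :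
    nextValue π p (fun s a => Q s a + c) = nextValue π p Q + c := by
  simp only [nextValue, (hπ _).sum_mul_add_const, hp.sum_mul_add_const]

variable [Fintype ι] {P : ι → ℝ} {M : ι → S → A → S → ℝ} {N : ℕ}

theorem pessBellman_apply (r : S → A → ℝ) (γ : ℝ) (P : ι → ℝ) (M : ι → S → A → S → ℝ)
    (π : S → A → ℝ) (k : Fin N) (Q : S → A → ℝ) (s : S) (a : A) :
    pessBellman r γ P M π N k Q s a = r s a + γ * ∑ v : Fin N → ι, (∏ j, P (v j)) *
      kmin (fun j => nextValue π (M (v j) s a) Q) k :=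
  rfl

theorem monotone_pessBellman (r : S → A → ℝ) {γ : ℝ} (hγ : 0 ≤ γ) (hπ : ∀ s, IsPMF (π s))
    (hP : IsPMF P) (hM : ∀ v s a, IsPMF (M v s a)) (k : Fin N) :
    Monotone (pessBellman r γ P M π N k) := fun Q₁ Q₂ hQ s a => by
  have kmin_le (v : Fin N → ι) : kmin (fun j => nextValue π (M (v j) s a) Q₁) k ≤
      kmin (fun j => nextValue π (M (v j) s a) Q₂) k :=
    kmin_le_kmin (fun j => monotone_nextValue hπ (hM (v j) s a) hQ) k
  simp only [pessBellman_apply]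
  gcongr r s a + γ * ?_
  exact (IsPMF.pi fun _ => hP).sum_mul_le_sum_mul kmin_le

theorem pessBellman_add_const (r : S → A → ℝ) (γ : ℝ) (hπ : ∀ s, IsPMF (π s)) (hP : IsPMF P)
    (hM : ∀ v s a, IsPMF (M v s a)) (k : Fin N) (Q : S → A → ℝ) (c : ℝ) (s : S) (a : A) :
    pessBellman r γ P M π N k (fun s a => Q s a + c) s a =
      pessBellman r γ P M π N k Q s a + γ * c := by
  simp only [pessBellman_apply, nextValue_add_const hπ (hM _ s a), kmin_add_const,
    (IsPMF.pi fun _ => hP).sum_mul_add_const]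
  ring

theorem lipschitzWith_pessBellman (r : S → A → ℝ) (γ : ℝ≥0) (hπ : ∀ s, IsPMF (π s))
    (hP : IsPMF P) (hM : ∀ v s a, IsPMF (M v s a)) (k : Fin N) :
    LipschitzWith γ (pessBellman r γ P M π N k) := by
  refine LipschitzWith.of_dist_le_mul fun Q₁ Q₂ => ?_
  have bound_nonneg : 0 ≤ γ * dist Q₁ Q₂ := by positivity
  refine (dist_pi_le_iff bound_nonneg).2 fun s => (dist_pi_le_iff bound_nonneg).2 fun a => ?_
  rw [dist_eq_norm Q₁ Q₂]
  refine abs_sub_le_mul_norm_of_monotone (f := fun Q => pessBellman r γ P M π N k Q s a)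
    le_norm_smul_one (fun _ _ hQ => monotone_pessBellman r γ.2 hπ hP hM k hQ s a)
    (fun Q c _ => ?_) Q₁ Q₂
  simpa [Pi.add_def] using (pessBellman_add_const r γ hπ hP hM k Q c s a).le

end Bellman

/-- Theorem 1 (Policy Evaluation): the `(N,k)`-pessimistic Bellman operator is a
`γ`-contraction for the sup norm; consequently it has a unique fixed point, and from any
starting point the iterates converge to the fixed point in sup norm. -/
theorem pessBellman_contraction {S A ι : Type*} [Fintype S] [Fintype A] [Fintype ι]
    [Nonempty S] [Nonempty A] [Nonempty ι]
    (r : S → A → ℝ) (γ : ℝ) (hγ0 : 0 ≤ γ) (hγ1 : γ < 1)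
    (π : S → A → ℝ) (hπ : ∀ s, IsPMF (π s))
    (P : ι → ℝ) (hP : IsPMF P)
    (M : ι → S → A → S → ℝ) (hM : ∀ v s a, IsPMF (M v s a))
    (N : ℕ) (hN : 1 ≤ N) (k : ℕ) (hk1 : 1 ≤ k) (hkN : k ≤ N) :
    (∀ Q1 Q2 : S → A → ℝ,
      supNorm (fun s a => pessBellman r γ P M π N ⟨k - 1, by omega⟩ Q1 s a
          - pessBellman r γ P M π N ⟨k - 1, by omega⟩ Q2 s a)
        ≤ γ * supNorm (fun s a => Q1 s a - Q2 s a)) ∧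
    (∃! Qfix : S → A → ℝ, pessBellman r γ P M π N ⟨k - 1, by omega⟩ Qfix = Qfix) ∧
    (∀ Qfix : S → A → ℝ, pessBellman r γ P M π N ⟨k - 1, by omega⟩ Qfix = Qfix →
      ∀ Q : S → A → ℝ,
        Filter.Tendsto
          (fun n => supNorm
            (fun s a => (pessBellman r γ P M π N ⟨k - 1, by omega⟩)^[n] Q s a - Qfix s a))
          Filter.atTop (nhds 0)) := by
  lift γ to ℝ≥0 using hγ0
  have hB : ContractingWith γ (pessBellman r γ P M π N ⟨k - 1, by omega⟩) :=
    ⟨mod_cast hγ1, lipschitzWith_pessBellman r γ hπ hP hM _⟩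
  simp only [supNorm_sub_eq_dist]
  refine ⟨hB.2.dist_le_mul,
    ⟨hB.fixedPoint, hB.fixedPoint_isFixedPt, fun _ hQ => hB.fixedPoint_unique hQ⟩,
    fun Qfix hfix Q => ?_⟩
  rw [← tendsto_iff_dist_tendsto_zero, hB.fixedPoint_unique hfix]
  exact hB.tendsto_iterate_fixedPoint Q
end

section
/- (Theorem 5, monotone improvement part) Let ρ0 be a probability mass function on S and α > 0. Define J(π) := Σ_s ρ0(s) · Σ_a π(a|s) · Q^π_{N,k}(s,a) and, for a reference policy μ with μ(a|s) > 0 for all s, a, define J̄(π;μ) := Σ_s ρ0(s) · ( Σ_a π(a|s) · Q̄^π_{N,k;μ}(s,a) − α·KL(π(·|s)‖μ(·|s)) ). Then J̄(π;π) = J(π) for every everywhere-positive policy π, and for any everywhere-positive policy π1 and any policy π2, if J̄(π2;π1) ≥ J̄(π1;π1) then J(π2) ≥ J(π1). -/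
/-- Kullback–Leibler divergence `KL(p‖q) = Σ_a p(a)·log(p(a)/q(a))` on a finite type
(with the convention `0·log 0 = 0`, automatic here). -/
noncomputable def KLdiv {α : Type*} [Fintype α] (p q : α → ℝ) : ℝ :=
  ∑ a, p a * Real.log (p a / q a)

/-- The soft `(N,k)`-pessimistic Bellman operator with reference policy `μ` and
coefficient `α` (with `k` given 0-indexed as `k : Fin N`):
`(B̄*_{N,k;μ} Q)(s,a) = r(s,a) + γ · Σ_{v} (Π_j P(v_j)) ·
  kmin_k( j ↦ Σ_{s'} M(v_j)(s,a)(s') · α·log Σ_{a'} μ(a'|s')·exp(Q(s',a')/α) )`. -/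
noncomputable def softBellman {S A ι : Type*} [Fintype S] [Fintype A] [Fintype ι]
    (r : S → A → ℝ) (γ : ℝ) (P : ι → ℝ) (M : ι → S → A → S → ℝ)
    (μ : S → A → ℝ) (α : ℝ) (N : ℕ) (k : Fin N) (Q : S → A → ℝ) : S → A → ℝ :=
  fun s a => r s a + γ * ∑ v : Fin N → ι, (∏ j, P (v j)) *
    kmin (fun j => ∑ s', M (v j) s a s' *
      (α * Real.log (∑ a', μ s' a' * Real.exp (Q s' a' / α)))) k

/-- The regularized `(N,k)`-pessimistic evaluation operator for policy `π`, reference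
policy `μ` and coefficient `α` (with `k` given 0-indexed as `k : Fin N`):
`(B̄^π_{N,k;μ} Q)(s,a) = r(s,a) + γ · Σ_{v} (Π_j P(v_j)) ·
  kmin_k( j ↦ Σ_{s'} M(v_j)(s,a)(s') · (Σ_{a'} π(a'|s')·Q(s',a') − α·KL(π(·|s')‖μ(·|s'))) )`. -/
noncomputable def regBellman {S A ι : Type*} [Fintype S] [Fintype A] [Fintype ι]
    (r : S → A → ℝ) (γ : ℝ) (P : ι → ℝ) (M : ι → S → A → S → ℝ)
    (π μ : S → A → ℝ) (α : ℝ) (N : ℕ) (k : Fin N) (Q : S → A → ℝ) : S → A → ℝ :=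
  fun s a => r s a + γ * ∑ v : Fin N → ι, (∏ j, P (v j)) *
    kmin (fun j => ∑ s', M (v j) s a s' *
      ((∑ a', π s' a' * Q s' a') - α * KLdiv (π s') (μ s'))) k

/-!
A fixed point `Q` of either evaluation operator has the form `Q = r + γ K V`, where `V` is the value
of `Q` under the policy (penalised by `α KL` in the regularized case) and `K` is the pessimistic
averaging over ensembles. Hence the value solves `V = T V`, respectively `V = T V - α KL`, for the
same operator `T` of Blackwell type. Since `KL ≥ 0`, the regularized value is a subsolution of
`V = T V`, so it lies below the unregularized value: `J̄(π; μ) ≤ J(π)`, with equality at `μ = π`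
where the penalty vanishes. Therefore `J(π₁) = J̄(π₁; π₁) ≤ J̄(π₂; π₁) ≤ J(π₂)`.
-/

/-- Blackwell's monotonicity and discounting conditions in one inequality; the shift `c` may have
either sign. -/
def IsDiscounted {X : Type*} (γ : ℝ) (T : (X → ℝ) → X → ℝ) : Prop :=
  ∀ ⦃f g : X → ℝ⦄ ⦃c : ℝ⦄, (∀ x, f x ≤ g x + c) → ∀ x, T f x ≤ T g x + γ * c

theorem IsDiscounted.le_of_le_apply_of_apply_le {X : Type*} [Finite X] {γ : ℝ}
    {T : (X → ℝ) → X → ℝ} (hT : IsDiscounted γ T) (hγ : γ < 1) {f g : X → ℝ}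
    (hf : f ≤ T f) (hg : T g ≤ g) : f ≤ g := by
  intro x
  have : Nonempty X := ⟨x⟩
  obtain ⟨m, hm⟩ := Finite.exists_max (f - g)
  have hgap : ∀ y, f y - g y ≤ f m - g m := hm
  have hstep : T f m ≤ T g m + γ * (f m - g m) := hT (fun y => by linarith [hgap y]) m
  have hcontract : (1 - γ) * (f m - g m) ≤ 0 := by linarith [hf m, hg m]
  have hmax : f m - g m ≤ 0 := nonpos_of_mul_nonpos_right hcontract (sub_pos.2 hγ)
  linarith [hgap x]

theorem IsDiscounted.eq_of_isFixedPt {X : Type*} [Finite X] {γ : ℝ} {T : (X → ℝ) → X → ℝ}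
    (hT : IsDiscounted γ T) (hγ : γ < 1) {f g : X → ℝ} (hf : Function.IsFixedPt T f)
    (hg : Function.IsFixedPt T g) : f = g :=
  le_antisymm (hT.le_of_le_apply_of_apply_le hγ hf.ge hg.le)
    (hT.le_of_le_apply_of_apply_le hγ hg.ge hf.le)

theorem kmin_le_iff {N : ℕ} (x : Fin N → ℝ) (k : Fin N) (t : ℝ) :
    kmin x k ≤ t ↔ (k : ℕ) < Finset.card {j | x j ≤ t} := by
  have hcard : Finset.card {j | x j ≤ t} = Finset.card {i | (x ∘ Tuple.sort x) i ≤ t} :=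
    (Finset.card_equiv (Tuple.sort x) fun i => by
      simp only [Finset.mem_filter_univ, Function.comp_apply]).symm
  rw [hcard, Tuple.lt_card_le_iff_apply_le_of_monotone (Tuple.monotone_sort x), kmin,
    Function.comp_apply]

theorem kmin_le_kmin_add {N : ℕ} {x y : Fin N → ℝ} {c : ℝ} (h : ∀ j, x j ≤ y j + c)
    (k : Fin N) : kmin x k ≤ kmin y k + c := by
  have hy : (k : ℕ) < Finset.card {j | y j ≤ kmin y k} := (kmin_le_iff y k _).1 le_rfl
  refine (kmin_le_iff x k _).2 (hy.trans_le (Finset.card_le_card ?_))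
  exact Finset.monotone_filter_right _ fun j _ hj => (h j).trans (by gcongr)

theorem IsPMF.sum_mul_le_sum_mul_add {X : Type*} [Fintype X] {p : X → ℝ} (hp : IsPMF p)
    {f g : X → ℝ} {c : ℝ} (h : ∀ x, f x ≤ g x + c) :
    ∑ x, p x * f x ≤ ∑ x, p x * g x + c :=
  calc ∑ x, p x * f x
      ≤ ∑ x, p x * (g x + c) :=
        Finset.sum_le_sum fun x _ => mul_le_mul_of_nonneg_left (h x) (hp.1 x)
    _ = ∑ x, p x * g x + c := by
        simp only [mul_add, Finset.sum_add_distrib, ← Finset.sum_mul, hp.2, one_mul]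

theorem IsPMF.pi_s16 {κ : Type*} [Fintype κ] [DecidableEq κ] {X : κ → Type*} [∀ j, Fintype (X j)]
    {p : ∀ j, X j → ℝ} (hp : ∀ j, IsPMF (p j)) :
    IsPMF fun v : ∀ j, X j => ∏ j, p j (v j) := by
  refine ⟨fun v => Finset.prod_nonneg fun j _ => (hp j).1 (v j), ?_⟩
  rw [← Fintype.prod_sum]
  exact Finset.prod_eq_one fun j _ => (hp j).2

theorem KLdiv_self {X : Type*} [Fintype X] (p : X → ℝ) : KLdiv p p = 0 := by
  refine Finset.sum_eq_zero fun x _ => ?_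
  rcases eq_or_ne (p x) 0 with hx | hx
  · rw [hx, zero_mul]
  · rw [div_self hx, Real.log_one, mul_zero]

theorem KLdiv_eq_sum_klFun {X : Type*} [Fintype X] {p q : X → ℝ} (hsum : ∑ x, p x = ∑ x, q x)
    (hpq : ∀ x, q x = 0 → p x = 0) :
    KLdiv p q = ∑ x, q x * InformationTheory.klFun (p x / q x) := by
  have hterm : ∀ x, q x * InformationTheory.klFun (p x / q x) =
      p x * Real.log (p x / q x) + (q x - p x) := by
    intro x
    rcases eq_or_ne (q x) 0 with hx | hx
    · simp only [hx, hpq x hx, zero_mul, sub_zero, add_zero]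
    · rw [InformationTheory.klFun_apply]
      field_simp
      ring
  simp only [hterm, Finset.sum_add_distrib, Finset.sum_sub_distrib, hsum, sub_self, add_zero,
    KLdiv]

theorem KLdiv_nonneg {X : Type*} [Fintype X] {p q : X → ℝ} (hp : IsPMF p) (hq : IsPMF q)
    (hpq : ∀ x, q x = 0 → p x = 0) : 0 ≤ KLdiv p q := by
  rw [KLdiv_eq_sum_klFun (hp.2.trans hq.2.symm) hpq]
  exact Finset.sum_nonneg fun x _ =>
    mul_nonneg (hq.1 x) (InformationTheory.klFun_nonneg (div_nonneg (hp.1 x) (hq.1 x)))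

section PessimisticBackup

variable {S A ι : Type*} [Fintype S] [Fintype ι]

/-- The one-step pessimistic backup of a state value `V`, the common part of `pessBellman` and
`regBellman`. -/
noncomputable def pessBackup (r : S → A → ℝ) (γ : ℝ) (P : ι → ℝ) (M : ι → S → A → S → ℝ)
    {N : ℕ} (k : Fin N) (V : S → ℝ) (s : S) (a : A) : ℝ :=
  r s a + γ * ∑ v : Fin N → ι, (∏ j, P (v j)) * kmin (fun j => ∑ s', M (v j) s a s' * V s') k

theorem pessBackup_le_add {r : S → A → ℝ} {γ : ℝ} {P : ι → ℝ} {M : ι → S → A → S → ℝ} {N : ℕ}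
    {k : Fin N} (hγ : 0 ≤ γ) (hP : IsPMF P) (hM : ∀ i s a, IsPMF (M i s a))
    {V W : S → ℝ} {c : ℝ} (h : ∀ s, V s ≤ W s + c) (s : S) (a : A) :
    pessBackup r γ P M k V s a ≤ pessBackup r γ P M k W s a + γ * c := by
  have hens := (IsPMF.pi_s16 fun _ : Fin N => hP).sum_mul_le_sum_mul_add fun v =>
    kmin_le_kmin_add (fun j => (hM (v j) s a).sum_mul_le_sum_mul_add h) k
  calc pessBackup r γ P M k V s a
      ≤ r s a + γ * (∑ v : Fin N → ι, (∏ j, P (v j)) *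
          kmin (fun j => ∑ s', M (v j) s a s' * W s') k + c) := by
        unfold pessBackup
        gcongr
    _ = pessBackup r γ P M k W s a + γ * c := by rw [pessBackup]; ring

end PessimisticBackup

section PolicyValue

variable {S A : Type*} [Fintype A]

/-- The state value `V(s) = Σ_a π(a|s) · Q(s,a)` of an action-value function under a policy. -/
def policyValue (π Q : S → A → ℝ) (s : S) : ℝ := ∑ a, π s a * Q s a

/-- The state value under `π`, penalised by `α · KL(π(·|s)‖μ(·|s))`. -/
noncomputable def regPolicyValue (π μ : S → A → ℝ) (α : ℝ) (Q : S → A → ℝ) (s : S) : ℝ :=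
  policyValue π Q s - α * KLdiv (π s) (μ s)

theorem regPolicyValue_self (π : S → A → ℝ) (α : ℝ) (Q : S → A → ℝ) :
    regPolicyValue π π α Q = policyValue π Q := by
  funext s
  rw [regPolicyValue, KLdiv_self, mul_zero, sub_zero]

theorem regPolicyValue_le {π μ : S → A → ℝ} {α : ℝ} (hα : 0 ≤ α) (hπ : ∀ s, IsPMF (π s))
    (hμ : ∀ s, IsPMF (μ s)) (hπμ : ∀ s a, μ s a = 0 → π s a = 0) (Q : S → A → ℝ) :
    regPolicyValue π μ α Q ≤ policyValue π Q :=
  fun s => sub_le_self _ (mul_nonneg hα (KLdiv_nonneg (hπ s) (hμ s) (hπμ s)))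

end PolicyValue

section PolicyEvaluation

variable {S A ι : Type*} [Fintype S] [Fintype A] [Fintype ι] {r : S → A → ℝ} {γ : ℝ} {P : ι → ℝ}
  {M : ι → S → A → S → ℝ} {N : ℕ} {k : Fin N} {π μ : S → A → ℝ} {α : ℝ} {Qb Q : S → A → ℝ}

theorem isDiscounted_policyValue_pessBackup (hγ : 0 ≤ γ) (hP : IsPMF P)
    (hM : ∀ i s a, IsPMF (M i s a)) (hπ : ∀ s, IsPMF (π s)) :
    IsDiscounted γ fun V => policyValue π (pessBackup r γ P M k V) :=
  fun _ _ _ h s => (hπ s).sum_mul_le_sum_mul_add (pessBackup_le_add hγ hP hM h s)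

theorem pessBellman_eq_pessBackup :
    pessBellman r γ P M π N k Q = pessBackup r γ P M k (policyValue π Q) := rfl

theorem regBellman_eq_pessBackup :
    regBellman r γ P M π μ α N k Q = pessBackup r γ P M k (regPolicyValue π μ α Q) := rfl

theorem regBellman_self :
    regBellman r γ P M π π α N k Q = pessBellman r γ P M π N k Q := by
  rw [regBellman_eq_pessBackup, regPolicyValue_self, pessBellman_eq_pessBackup]

theorem isFixedPt_policyValue (hQ : pessBellman r γ P M π N k Q = Q) :
    Function.IsFixedPt (fun V => policyValue π (pessBackup r γ P M k V)) (policyValue π Q) :=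
  congrArg (policyValue π) (pessBellman_eq_pessBackup.symm.trans hQ)

theorem regPolicyValue_le_policyValue_of_fixed (hγ0 : 0 ≤ γ) (hγ1 : γ < 1) (hP : IsPMF P)
    (hM : ∀ i s a, IsPMF (M i s a)) (hα : 0 ≤ α) (hπ : ∀ s, IsPMF (π s))
    (hμ : ∀ s, IsPMF (μ s)) (hπμ : ∀ s a, μ s a = 0 → π s a = 0)
    (hQb : regBellman r γ P M π μ α N k Qb = Qb) (hQ : pessBellman r γ P M π N k Q = Q) :
    regPolicyValue π μ α Qb ≤ policyValue π Q := by
  have hsub : regPolicyValue π μ α Qb ≤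
      policyValue π (pessBackup r γ P M k (regPolicyValue π μ α Qb)) := by
    rw [← regBellman_eq_pessBackup, hQb]
    exact regPolicyValue_le hα hπ hμ hπμ Qb
  exact (isDiscounted_policyValue_pessBackup hγ0 hP hM hπ).le_of_le_apply_of_apply_le hγ1 hsub
    (isFixedPt_policyValue hQ).le

theorem regPolicyValue_self_eq_policyValue_of_fixed (hγ0 : 0 ≤ γ) (hγ1 : γ < 1) (hP : IsPMF P)
    (hM : ∀ i s a, IsPMF (M i s a)) (hπ : ∀ s, IsPMF (π s))
    (hQb : regBellman r γ P M π π α N k Qb = Qb) (hQ : pessBellman r γ P M π N k Q = Q) :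
    regPolicyValue π π α Qb = policyValue π Q := by
  rw [regBellman_self] at hQb
  rw [regPolicyValue_self]
  exact (isDiscounted_policyValue_pessBackup hγ0 hP hM hπ).eq_of_isFixedPt hγ1
    (isFixedPt_policyValue hQb) (isFixedPt_policyValue hQ)

end PolicyEvaluation

theorem monotone_policy_improvement_general {S A ι : Type*} [Fintype S] [Fintype A] [Fintype ι]
    {r : S → A → ℝ} {γ : ℝ} (hγ0 : 0 ≤ γ) (hγ1 : γ < 1) {P : ι → ℝ} (hP : IsPMF P)
    {M : ι → S → A → S → ℝ} (hM : ∀ i s a, IsPMF (M i s a)) {N : ℕ} (k : Fin N)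
    {ρ0 : S → ℝ} (hρ0 : ∀ s, 0 ≤ ρ0 s) {α : ℝ} (hα : 0 ≤ α) :
    (∀ π : S → A → ℝ, (∀ s, IsPMF (π s)) → ∀ Qb Q : S → A → ℝ,
      regBellman r γ P M π π α N k Qb = Qb → pessBellman r γ P M π N k Q = Q →
      ∑ s, ρ0 s * regPolicyValue π π α Qb s = ∑ s, ρ0 s * policyValue π Q s) ∧
    (∀ π₁ : S → A → ℝ, (∀ s, IsPMF (π₁ s)) → ∀ π₂ : S → A → ℝ, (∀ s, IsPMF (π₂ s)) →
      (∀ s a, π₁ s a = 0 → π₂ s a = 0) → ∀ Qb₁ Qb₂ Q₁ Q₂ : S → A → ℝ,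
      regBellman r γ P M π₁ π₁ α N k Qb₁ = Qb₁ → regBellman r γ P M π₂ π₁ α N k Qb₂ = Qb₂ →
      pessBellman r γ P M π₁ N k Q₁ = Q₁ → pessBellman r γ P M π₂ N k Q₂ = Q₂ →
      ∑ s, ρ0 s * regPolicyValue π₁ π₁ α Qb₁ s ≤ ∑ s, ρ0 s * regPolicyValue π₂ π₁ α Qb₂ s →
      ∑ s, ρ0 s * policyValue π₁ Q₁ s ≤ ∑ s, ρ0 s * policyValue π₂ Q₂ s) := by
  refine ⟨fun π hπ Qb Q hQb hQ => ?_,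
    fun π₁ hπ₁ π₂ hπ₂ hac Qb₁ Qb₂ Q₁ Q₂ hQb₁ hQb₂ hQ₁ hQ₂ hle => ?_⟩
  · rw [regPolicyValue_self_eq_policyValue_of_fixed hγ0 hγ1 hP hM hπ hQb hQ]
  · have hvalue := regPolicyValue_le_policyValue_of_fixed hγ0 hγ1 hP hM hα hπ₂ hπ₁ hac hQb₂ hQ₂
    calc ∑ s, ρ0 s * policyValue π₁ Q₁ s
        = ∑ s, ρ0 s * regPolicyValue π₁ π₁ α Qb₁ s := by
          rw [regPolicyValue_self_eq_policyValue_of_fixed hγ0 hγ1 hP hM hπ₁ hQb₁ hQ₁]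
      _ ≤ ∑ s, ρ0 s * regPolicyValue π₂ π₁ α Qb₂ s := hle
      _ ≤ ∑ s, ρ0 s * policyValue π₂ Q₂ s :=
          Finset.sum_le_sum fun s _ => mul_le_mul_of_nonneg_left (hvalue s) (hρ0 s)

/-- Theorem 5, monotone improvement part.  With
`J(π) = Σ_s ρ0(s)·Σ_a π(a|s)·Q^π_{N,k}(s,a)` and
`J̄(π;μ) = Σ_s ρ0(s)·(Σ_a π(a|s)·Q̄^π_{N,k;μ}(s,a) − α·KL(π(·|s)‖μ(·|s)))`
(expressed via the respective fixed points), we have `J̄(π;π) = J(π)` for every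
everywhere-positive policy `π`, and for any everywhere-positive policy `π1` and any
policy `π2`, `J̄(π2;π1) ≥ J̄(π1;π1)` implies `J(π2) ≥ J(π1)`. -/
theorem monotone_policy_improvement {S A ι : Type*} [Fintype S] [Fintype A] [Fintype ι]
    (r : S → A → ℝ) (γ : ℝ) (hγ0 : 0 ≤ γ) (hγ1 : γ < 1)
    (P : ι → ℝ) (hP : IsPMF P)
    (M : ι → S → A → S → ℝ) (hM : ∀ v s a, IsPMF (M v s a))
    (N : ℕ) (hN : 1 ≤ N) (k : ℕ) (hk1 : 1 ≤ k) (hkN : k ≤ N)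
    (ρ0 : S → ℝ) (hρ0 : IsPMF ρ0) (α : ℝ) (hα : 0 < α) :
    -- `J̄(π;π) = J(π)` for every everywhere-positive policy `π`
    (∀ π : S → A → ℝ, (∀ s, IsPMF (π s)) → (∀ s a, 0 < π s a) →
      ∀ Qb Q : S → A → ℝ,
        regBellman r γ P M π π α N ⟨k - 1, by omega⟩ Qb = Qb →
        pessBellman r γ P M π N ⟨k - 1, by omega⟩ Q = Q →
        ∑ s, ρ0 s * ((∑ a, π s a * Qb s a) - α * KLdiv (π s) (π s))
          = ∑ s, ρ0 s * ∑ a, π s a * Q s a) ∧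
    -- `J̄(π2;π1) ≥ J̄(π1;π1)` implies `J(π2) ≥ J(π1)`
    (∀ π1 : S → A → ℝ, (∀ s, IsPMF (π1 s)) → (∀ s a, 0 < π1 s a) →
     ∀ π2 : S → A → ℝ, (∀ s, IsPMF (π2 s)) →
      ∀ Qb1 Qb2 Q1 Q2 : S → A → ℝ,
        regBellman r γ P M π1 π1 α N ⟨k - 1, by omega⟩ Qb1 = Qb1 →
        regBellman r γ P M π2 π1 α N ⟨k - 1, by omega⟩ Qb2 = Qb2 →
        pessBellman r γ P M π1 N ⟨k - 1, by omega⟩ Q1 = Q1 →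
        pessBellman r γ P M π2 N ⟨k - 1, by omega⟩ Q2 = Q2 →
        (∑ s, ρ0 s * ((∑ a, π1 s a * Qb1 s a) - α * KLdiv (π1 s) (π1 s))
          ≤ ∑ s, ρ0 s * ((∑ a, π2 s a * Qb2 s a) - α * KLdiv (π2 s) (π1 s))) →
        ∑ s, ρ0 s * ∑ a, π1 s a * Q1 s a ≤ ∑ s, ρ0 s * ∑ a, π2 s a * Q2 s a) := by
  obtain ⟨hself, hmono⟩ :=
    monotone_policy_improvement_general hγ0 hγ1 hP hM (⟨k - 1, by omega⟩ : Fin N) hρ0.1 hα.le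
  exact ⟨fun π hπ _ => hself π hπ, fun π1 hπ1 hpos π2 hπ2 =>
    hmono π1 hπ1 π2 hπ2 fun s a h => absurd h (hpos s a).ne'⟩
end
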